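/- arXiv:2604.10757 — 5 statements merged into one kernel-verified Lean document; each statement's English description precedes it below -/
import Mathlib

section
/- Let E and F be finite-dimensional real inner product spaces. On the set Σ := {T : E →L[ℝ] F | T is surjective}, the map T ↦ T.adjoint ∘L Ring.inverse (T ∘L T.adjoint), sending each surjective continuous linear map to its Moore–Penrose pseudoinverse T* ∘ (T ∘ T*)⁻¹, is infinitely differentiable (C^∞, i.e., ContDiffOn ℝ ⊤ on Σ). -/
/-- The adjoint, as a real-linear map, is smooth. -/
theorem contDiff_adjoint_aux
    {E F : Type*} [NormedAddCommGroup E] [InnerProductSpace ℝ E] [FiniteDimensional ℝ E]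
    [NormedAddCommGroup F] [InnerProductSpace ℝ F] [FiniteDimensional ℝ F] :
    ContDiff ℝ (⊤ : ℕ∞) (fun T : E →L[ℝ] F => ContinuousLinearMap.adjoint T) := by
  have h : IsBoundedLinearMap ℝ (fun T : E →L[ℝ] F => ContinuousLinearMap.adjoint T) :=
    { map_add := fun x y => map_add _ x y
      map_smul := fun c x => by
        have := map_smulₛₗ (ContinuousLinearMap.adjoint (𝕜 := ℝ) (E := E) (F := F)) c x
        rw [conj_trivial] at this
        exact this
      bound := ⟨1, one_pos, fun x => by rw [LinearIsometryEquiv.norm_map, one_mul]⟩ }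
  exact h.contDiff

theorem isUnit_aux
    {E F : Type*} [NormedAddCommGroup E] [InnerProductSpace ℝ E] [FiniteDimensional ℝ E]
    [NormedAddCommGroup F] [InnerProductSpace ℝ F] [FiniteDimensional ℝ F]
    (T : E →L[ℝ] F) (hT' : Function.Surjective T) :
    IsUnit (T ∘L ContinuousLinearMap.adjoint T) := by
    rw [ContinuousLinearMap.isUnit_iff_isUnit_toLinearMap, LinearMap.isUnit_iff_ker_eq_bot]
    have h1 := ContinuousLinearMap.ker_self_comp_adjoint T
    rw [h1, ← ContinuousLinearMap.orthogonal_range, LinearMap.range_eq_top.2 hT',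
      Submodule.top_orthogonal_eq_bot]

theorem inv_aux {F : Type*} [NormedAddCommGroup F] [InnerProductSpace ℝ F] [FiniteDimensional ℝ F]
    (S : F →L[ℝ] F) (hS : IsUnit S) :
    ContDiffAt ℝ (⊤ : ℕ∞) (fun S : F →L[ℝ] F => Ring.inverse S) S := by
  obtain ⟨u, rfl⟩ := hS
  exact contDiffAt_ringInverse ℝ u

theorem comp_aux
    {E F : Type*} [NormedAddCommGroup E] [InnerProductSpace ℝ E] [FiniteDimensional ℝ E]
    [NormedAddCommGroup F] [InnerProductSpace ℝ F] [FiniteDimensional ℝ F]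
    (T : E →L[ℝ] F) : ContDiffAt ℝ (⊤ : ℕ∞)
      (fun T : E →L[ℝ] F => T ∘L ContinuousLinearMap.adjoint T) T :=
  contDiffAt_id.clm_comp contDiff_adjoint_aux.contDiffAt

theorem invcomp_aux
    {E F : Type*} [NormedAddCommGroup E] [InnerProductSpace ℝ E] [FiniteDimensional ℝ E]
    [NormedAddCommGroup F] [InnerProductSpace ℝ F] [FiniteDimensional ℝ F]
    (T : E →L[ℝ] F) (hT : Function.Surjective T) : ContDiffAt ℝ (⊤ : ℕ∞)
      (fun T : E →L[ℝ] F => Ring.inverse (T ∘L ContinuousLinearMap.adjoint T)) T :=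
  ContDiffAt.comp T (inv_aux _ (isUnit_aux T hT)) (comp_aux T)

/-- On the set of surjective continuous linear maps `T : E →L[ℝ] F` between
finite-dimensional real inner product spaces, the Moore–Penrose pseudoinverse map
`T ↦ T.adjoint ∘L (T ∘L T.adjoint)⁻¹` is `C^∞`. -/
theorem stmt3
    {E F : Type*} [NormedAddCommGroup E] [InnerProductSpace ℝ E] [FiniteDimensional ℝ E]
    [NormedAddCommGroup F] [InnerProductSpace ℝ F] [FiniteDimensional ℝ F] :
    ContDiffOn ℝ (⊤ : ℕ∞)
      (fun T : E →L[ℝ] F =>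
        ContinuousLinearMap.adjoint T ∘L Ring.inverse (T ∘L ContinuousLinearMap.adjoint T))
      {T : E →L[ℝ] F | Function.Surjective T} := by
  intro T hT
  exact (contDiff_adjoint_aux.contDiffAt.clm_comp (invcomp_aux T hT)).contDiffWithinAt
end

section
/- Let E be a finite-dimensional real inner product space, let X : E → E be differentiable, let ε > 0, and let q : ℝ → E be twice differentiable and satisfy the closed-loop Koditschek equation q''(t) = (fderiv ℝ X (q t)) (q'(t)) − ε⁻¹ • (q'(t) − X (q t)) for all t ∈ ℝ. Then the velocity error y(t) := q'(t) − X(q(t)) satisfies y(t) = exp(−t/ε) • y(0) for all t ∈ ℝ. In particular, ‖q'(t) − X(q(t))‖ = exp(−t/ε) · ‖q'(0) − X(q(0))‖ for all t. -/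
/-- For the Euclidean closed-loop Koditschek equation
`q'' = (DX)(q) q' − ε⁻¹ (q' − X(q))`, the velocity error `y(t) = q'(t) − X(q(t))` satisfies
`y(t) = exp(−t/ε) y(0)`; in particular its norm decays exactly exponentially. -/
theorem stmt7
    {E : Type*} [NormedAddCommGroup E] [InnerProductSpace ℝ E] [FiniteDimensional ℝ E]
    (X : E → E) (hX : Differentiable ℝ X) (ε : ℝ) (hε : 0 < ε)
    (q : ℝ → E) (hq : Differentiable ℝ q) (hq' : Differentiable ℝ (deriv q))
    (heq : ∀ t : ℝ, deriv (deriv q) t =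
      (fderiv ℝ X (q t)) (deriv q t) - ε⁻¹ • (deriv q t - X (q t))) :
    ∀ t : ℝ,
      deriv q t - X (q t) = Real.exp (-t / ε) • (deriv q 0 - X (q 0)) ∧
      ‖deriv q t - X (q t)‖ = Real.exp (-t / ε) * ‖deriv q 0 - X (q 0)‖ := by
  have hy : ∀ t : ℝ, HasDerivAt (fun s => deriv q s - X (q s))
      (-(ε⁻¹ • (deriv q t - X (q t)))) t := by
    intro t
    have h1 := (hq' t).hasDerivAt
    have h2 : HasDerivAt (fun s => X (q s)) ((fderiv ℝ X (q t)) (deriv q t)) t :=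
      (hX (q t)).hasFDerivAt.comp_hasDerivAt t (hq t).hasDerivAt
    have h3 := h1.sub h2
    rw [heq t] at h3
    convert h3 using 1
    · rfl
    rw [sub_sub_cancel_left]
  have hz : ∀ t : ℝ, HasDerivAt (fun s => Real.exp (s / ε) • (deriv q s - X (q s))) 0 t := by
    intro t
    have h1 : HasDerivAt (fun s : ℝ => Real.exp (s / ε)) (Real.exp (t / ε) * (1 / ε)) t :=
      ((hasDerivAt_id t).div_const ε).exp
    have h2 := h1.smul (hy t)
    convert h2 using 1
    · rfl
    rw [smul_neg, smul_smul, one_div, neg_add_cancel]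
  have hmain : ∀ t : ℝ,
      deriv q t - X (q t) = Real.exp (-t / ε) • (deriv q 0 - X (q 0)) := by
    intro t
    have hc := is_const_of_deriv_eq_zero (fun s => (hz s).differentiableAt)
      (fun s => (hz s).deriv) t 0
    simp only [zero_div, Real.exp_zero, one_smul] at hc
    rw [← hc, smul_smul, ← Real.exp_add, neg_div, neg_add_cancel, Real.exp_zero, one_smul]
  intro t
  refine ⟨hmain t, ?_⟩
  rw [hmain t, norm_smul, Real.norm_eq_abs, Real.abs_exp]
end

section
/- Let E be a finite-dimensional real inner product space, let X : E → E be differentiable, let ε > 0, and let q : ℝ → E be twice differentiable and satisfy q''(t) = (fderiv ℝ X (q t)) (q'(t)) − ε⁻¹ • (q'(t) − X (q t)) for all t ∈ ℝ. If q'(0) = X(q(0)), then q'(t) = X(q(t)) for all t ∈ ℝ; that is, q is a trajectory of the first-order reference dynamics q̇ = X(q), so the graph of X is an invariant set for the closed-loop second-order system. -/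
/-- For the Euclidean closed-loop Koditschek equation, if the initial velocity lies
on the section, i.e. `q'(0) = X(q(0))`, then `q'(t) = X(q(t))` for all `t`: the graph of `X` is
invariant and `q` is a trajectory of the first-order reference dynamics. -/
theorem stmt8
    {E : Type*} [NormedAddCommGroup E] [InnerProductSpace ℝ E] [FiniteDimensional ℝ E]
    (X : E → E) (hX : Differentiable ℝ X) (ε : ℝ) (hε : 0 < ε)
    (q : ℝ → E) (hq : Differentiable ℝ q) (hq' : Differentiable ℝ (deriv q))
    (heq : ∀ t : ℝ, deriv (deriv q) t =
      (fderiv ℝ X (q t)) (deriv q t) - ε⁻¹ • (deriv q t - X (q t)))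
    (h0 : deriv q 0 = X (q 0)) :
    ∀ t : ℝ, deriv q t = X (q t) := by
  have hd : ∀ t : ℝ, HasDerivAt (fun t => Real.exp (ε⁻¹ * t) • (deriv q t - X (q t))) 0 t := by
    intro t
    have h1 : HasDerivAt (fun t : ℝ => Real.exp (ε⁻¹ * t)) (Real.exp (ε⁻¹ * t) * ε⁻¹) t := by
      simpa using ((hasDerivAt_id t).const_mul ε⁻¹).exp
    have h2 : HasDerivAt (fun t => X (q t)) ((fderiv ℝ X (q t)) (deriv q t)) t :=
      (hX (q t)).hasFDerivAt.comp_hasDerivAt t (hq t).hasDerivAt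
    have h3 := h1.smul ((hq' t).hasDerivAt.sub h2)
    refine h3.congr_deriv ?_
    rw [heq t]
    simp only [Pi.sub_apply]
    module
  intro t
  have h := is_const_of_deriv_eq_zero (fun t => (hd t).differentiableAt)
    (fun t => (hd t).deriv) t 0
  simp only [h0, sub_self, smul_zero] at h
  exact sub_eq_zero.mp ((smul_eq_zero.mp h).resolve_left (Real.exp_pos _).ne')
end

section
/- Let E be a finite-dimensional real inner product space, let H : E → (E →L[ℝ] E) be a map, let ε > 0 and 0 < c ≤ C be constants with c · ‖v‖² ≤ ⟪v, H(x) v⟫ ≤ C · ‖v‖² for all x, v ∈ E. Let X : E → E be differentiable, and let q : ℝ → E be twice differentiable and satisfy q''(t) = (fderiv ℝ X (q t)) (q'(t)) − ε⁻¹ • H(q t) (q'(t) − X (q t)) for all t. Then the error y(t) := q'(t) − X(q(t)) satisfies, for all t ≥ 0, exp(−(2C/ε)·t) · ‖y(0)‖² ≤ ‖y(t)‖² ≤ exp(−(2c/ε)·t) · ‖y(0)‖². -/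
open RealInnerProductSpace

/-- Two-sided exponential estimate for the velocity error of the closed-loop
Koditschek system with metric-comparison operator `H` satisfying
`c‖v‖² ≤ ⟪v, H x v⟫ ≤ C‖v‖²`: for `y(t) = q'(t) − X(q(t))` and all `t ≥ 0`,
`exp(−(2C/ε)t)‖y 0‖² ≤ ‖y t‖² ≤ exp(−(2c/ε)t)‖y 0‖²`. -/
theorem stmt9
    {E : Type*} [NormedAddCommGroup E] [InnerProductSpace ℝ E] [FiniteDimensional ℝ E]
    (H : E → (E →L[ℝ] E)) (ε : ℝ) (hε : 0 < ε) (c C : ℝ) (hc : 0 < c) (hcC : c ≤ C)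
    (hH : ∀ x v : E, c * ‖v‖ ^ 2 ≤ ⟪v, H x v⟫ ∧ ⟪v, H x v⟫ ≤ C * ‖v‖ ^ 2)
    (X : E → E) (hX : Differentiable ℝ X)
    (q : ℝ → E) (hq : Differentiable ℝ q) (hq' : Differentiable ℝ (deriv q))
    (heq : ∀ t : ℝ, deriv (deriv q) t =
      (fderiv ℝ X (q t)) (deriv q t) - ε⁻¹ • (H (q t)) (deriv q t - X (q t))) :
    ∀ t : ℝ, 0 ≤ t →
      Real.exp (-(2 * C / ε) * t) * ‖deriv q 0 - X (q 0)‖ ^ 2 ≤ ‖deriv q t - X (q t)‖ ^ 2 ∧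
      ‖deriv q t - X (q t)‖ ^ 2 ≤ Real.exp (-(2 * c / ε) * t) * ‖deriv q 0 - X (q 0)‖ ^ 2 := by
  have hy : ∀ t, HasDerivAt (fun s => deriv q s - X (q s))
      (-(ε⁻¹ • (H (q t)) (deriv q t - X (q t)))) t := by
    intro t
    have h1 := (hq' t).hasDerivAt
    have h2 := (hX (q t)).hasFDerivAt.comp_hasDerivAt t (hq t).hasDerivAt
    have h3 := h1.sub h2
    rw [heq t] at h3
    rw [sub_sub_cancel_left] at h3
    exact h3
  have hf : ∀ t, HasDerivAt (fun s => ‖deriv q s - X (q s)‖ ^ 2)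
      (-(2 / ε * ⟪deriv q t - X (q t), H (q t) (deriv q t - X (q t))⟫)) t := by
    intro t
    convert (hy t).norm_sq using 1
    rw [inner_neg_right, inner_smul_right]
    ring
  have hg : ∀ k t, HasDerivAt (fun s => Real.exp (k * s) * ‖deriv q s - X (q s)‖ ^ 2)
      (Real.exp (k * t) * (k * ‖deriv q t - X (q t)‖ ^ 2 -
        2 / ε * ⟪deriv q t - X (q t), H (q t) (deriv q t - X (q t))⟫)) t := by
    intro k t
    have h1 : HasDerivAt (fun s => Real.exp (k * s)) (Real.exp (k * t) * (k * 1)) t :=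
      ((hasDerivAt_id t).const_mul k).exp
    refine (h1.mul (hf t)).congr_deriv ?_
    ring
  have hε2 : 0 ≤ 2 / ε := by positivity
  have hmono : Monotone (fun s => Real.exp ((2 * C / ε) * s) * ‖deriv q s - X (q s)‖ ^ 2) := by
    apply monotone_of_deriv_nonneg (fun t => (hg _ t).differentiableAt)
    intro t
    rw [(hg _ t).deriv]
    apply mul_nonneg (Real.exp_pos _).le
    have := mul_le_mul_of_nonneg_left (hH (q t) (deriv q t - X (q t))).2 hε2
    have e : 2 * C / ε * ‖deriv q t - X (q t)‖ ^ 2 =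
      2 / ε * (C * ‖deriv q t - X (q t)‖ ^ 2) := by ring
    linarith
  have hanti : Antitone (fun s => Real.exp ((2 * c / ε) * s) * ‖deriv q s - X (q s)‖ ^ 2) := by
    apply antitone_of_deriv_nonpos (fun t => (hg _ t).differentiableAt)
    intro t
    rw [(hg _ t).deriv]
    apply mul_nonpos_of_nonneg_of_nonpos (Real.exp_pos _).le
    have := mul_le_mul_of_nonneg_left (hH (q t) (deriv q t - X (q t))).1 hε2
    have e : 2 * c / ε * ‖deriv q t - X (q t)‖ ^ 2 =
      2 / ε * (c * ‖deriv q t - X (q t)‖ ^ 2) := by ring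
    linarith
  intro t ht
  have h1 := hmono ht
  have h2 := hanti ht
  simp only [mul_zero, Real.exp_zero, one_mul] at h1 h2
  rw [neg_mul, neg_mul, Real.exp_neg, Real.exp_neg]
  exact ⟨(inv_mul_le_iff₀ (Real.exp_pos _)).2 h1, (le_inv_mul_iff₀ (Real.exp_pos _)).2 h2⟩
end

section
/- Let E be a finite-dimensional real inner product space, let H : E → (E →L[ℝ] E) be a map, let ε > 0, let X : E → E be differentiable, and let q : ℝ → E be twice differentiable and satisfy q''(t) = (fderiv ℝ X (q t)) (q'(t)) − ε⁻¹ • H(q t) (q'(t) − X (q t)) for all t. Then the error y(t) := q'(t) − X(q(t)) is differentiable with deriv y t = −ε⁻¹ • H(q t) (y t), and consequently the squared norm satisfies deriv (fun t ↦ ‖y t‖²) t = −(2/ε) · ⟪y t, H(q t) (y t)⟫ for every t. -/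
open RealInnerProductSpace

/-- For the closed-loop Koditschek system with operator family `H`, the velocity
error `y(t) = q'(t) − X(q(t))` is differentiable with `y' = −ε⁻¹ H(q) y`, and consequently
`(d/dt) ‖y‖² = −(2/ε) ⟪y, H(q) y⟫`. -/
theorem stmt10
    {E : Type*} [NormedAddCommGroup E] [InnerProductSpace ℝ E] [FiniteDimensional ℝ E]
    (H : E → (E →L[ℝ] E)) (ε : ℝ) (hε : 0 < ε)
    (X : E → E) (hX : Differentiable ℝ X)
    (q : ℝ → E) (hq : Differentiable ℝ q) (hq' : Differentiable ℝ (deriv q))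
    (heq : ∀ t : ℝ, deriv (deriv q) t =
      (fderiv ℝ X (q t)) (deriv q t) - ε⁻¹ • (H (q t)) (deriv q t - X (q t))) :
    ∀ t : ℝ,
      DifferentiableAt ℝ (fun s => deriv q s - X (q s)) t ∧
      deriv (fun s => deriv q s - X (q s)) t =
        -ε⁻¹ • (H (q t)) (deriv q t - X (q t)) ∧
      deriv (fun s => ‖deriv q s - X (q s)‖ ^ 2) t =
        -(2 / ε) * ⟪deriv q t - X (q t), (H (q t)) (deriv q t - X (q t))⟫ := by
  intro t
  have h : HasDerivAt (fun s => deriv q s - X (q s))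
      (-ε⁻¹ • (H (q t)) (deriv q t - X (q t))) t := by
    have h1 := (hq' t).hasDerivAt
    have h2 := (hX (q t)).hasFDerivAt.comp_hasDerivAt t (hq t).hasDerivAt
    have h3 := h1.sub h2
    have e : deriv (deriv q) t - (fderiv ℝ X (q t)) (deriv q t) =
        -ε⁻¹ • (H (q t)) (deriv q t - X (q t)) := by
      rw [heq t, neg_smul]
      abel
    rw [e] at h3
    exact h3
  refine ⟨h.differentiableAt, h.deriv, ?_⟩
  rw [h.norm_sq.deriv, real_inner_smul_right]
  ring
end
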